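/- The number of tournaments on the 5-element set Fin 5 having no vertex of out-degree 4, no vertex of out-degree 0, exactly one vertex v of out-degree 2, and such that both vertices of out-degree 3 defeat v, is exactly 120. -/

import Mathlib

/-- A tournament: an irreflexive relation such that for distinct vertices exactly one
direction holds. -/
def IsTournament (r : Fin 5 → Fin 5 → Prop) : Prop :=
  (∀ a, ¬ r a a) ∧ ∀ a b : Fin 5, a ≠ b → Xor' (r a b) (r b a)

/-- The out-degree of a vertex: the number of vertices it defeats. -/
noncomputable def outDeg (r : Fin 5 → Fin 5 → Prop) (v : Fin 5) : ℕ :=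
  Nat.card {w : Fin 5 // r v w}

/-- Ten Boolean arcs. -/
abbrev Arcs : Type :=
  Bool × Bool × Bool × Bool × Bool × Bool × Bool × Bool × Bool × Bool

/-- The tournament given by its ten arcs. -/
def arcRel : Arcs → Fin 5 → Fin 5 → Bool
  | (a, b, c, d, e, f, g, h, i, j) =>
    ![![false, a, b, c, d], ![!a, false, e, f, g], ![!b, !e, false, h, i],
      ![!c, !f, !h, false, j], ![!d, !g, !i, !j, false]]

/-- Computable out-degree. -/
def bDeg (R : Fin 5 → Fin 5 → Bool) (v : Fin 5) : ℕ :=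
  (R v 0).toNat + (R v 1).toNat + (R v 2).toNat + (R v 3).toNat + (R v 4).toNat

/-- Computable form of the condition. -/
abbrev Good (R : Fin 5 → Fin 5 → Bool) : Prop :=
  (¬ ∃ w, bDeg R w = 4) ∧ (¬ ∃ l, bDeg R l = 0) ∧
      (∃ v, bDeg R v = 2 ∧ (∀ u, bDeg R u = 2 → u = v) ∧
        (∀ u, bDeg R u = 3 → R u v = true))

lemma outDeg_eq (R : Fin 5 → Fin 5 → Bool) (v : Fin 5) :
    outDeg (fun a b => R a b = true) v = bDeg R v := by
  unfold outDeg bDeg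
  rw [Nat.card_eq_fintype_card, Fintype.card_subtype, Finset.card_filter, Fin.sum_univ_five]
  simp only [Bool.toNat, Bool.cond_eq_ite]

lemma arcRel_tournament (t : Arcs) : IsTournament (fun a b => arcRel t a b = true) := by
  obtain ⟨a, b, c, d, e, f, g, h, i, j⟩ := t
  constructor
  · intro x
    fin_cases x <;> simp [arcRel]
  · intro x y hxy
    fin_cases x <;> fin_cases y <;> first | exact absurd rfl hxy | simp [arcRel, Xor']
    all_goals grind

open Classical in
/-- Reading the arcs off a relation. -/
noncomputable def arcsOf (r : Fin 5 → Fin 5 → Prop) : Arcs :=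
  (decide (r 0 1), decide (r 0 2), decide (r 0 3), decide (r 0 4), decide (r 1 2),
    decide (r 1 3), decide (r 1 4), decide (r 2 3), decide (r 2 4), decide (r 3 4))

lemma arcsOf_arcRel (t : Arcs) : arcsOf (fun a b => arcRel t a b = true) = t := by
  obtain ⟨a, b, c, d, e, f, g, h, i, j⟩ := t
  simp [arcsOf, arcRel]

lemma arcRel_arcsOf (r : Fin 5 → Fin 5 → Prop) (hr : IsTournament r) :
    (fun a b => arcRel (arcsOf r) a b = true) = r := by
  obtain ⟨h1, h2⟩ := hr
  have key : ∀ a b : Fin 5, a ≠ b → (¬ r a b ↔ r b a) := by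
    intro a b hab
    have := h2 a b hab
    unfold Xor' Xor at this
    tauto
  funext x y
  apply propext
  fin_cases x <;> fin_cases y <;> simp [arcsOf, arcRel, h1] <;> exact key _ _ (by decide)

lemma count_good : Fintype.card {t : Arcs // Good (arcRel t)} = 120 := by
  decide +kernel

/-- exactly 120 tournaments on Fin 5 have no vertex of out-degree 4,
no vertex of out-degree 0, exactly one vertex v of out-degree 2, and both vertices
of out-degree 3 defeat v (the class Γ₁,₁). -/
theorem count_Gamma11 :
    Nat.card {r : Fin 5 → Fin 5 → Prop //
      IsTournament r ∧ (¬ ∃ w, outDeg r w = 4) ∧ (¬ ∃ l, outDeg r l = 0) ∧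
      (∃ v, outDeg r v = 2 ∧ (∀ u, outDeg r u = 2 → u = v) ∧
        (∀ u, outDeg r u = 3 → r u v))} = 120 := by
  rw [← count_good, ← Nat.card_eq_fintype_card]
  symm
  refine Nat.card_congr
    { toFun := fun t => ⟨fun a b => arcRel t.1 a b = true, arcRel_tournament t.1, ?_⟩
      invFun := fun r => ⟨arcsOf r.1, ?_⟩
      left_inv := fun t => Subtype.ext (arcsOf_arcRel t.1)
      right_inv := fun r => Subtype.ext (arcRel_arcsOf r.1 r.2.1) }
  · simp only [outDeg_eq]
    exact t.2
  · have h := r.2.2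
    rw [← arcRel_arcsOf r.1 r.2.1] at h
    simp only [outDeg_eq] at h
    exact h
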